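/- For every function of hyperbolic type F on a group Γ and every γ ∈ Γ, the sequence (arcosh(F(γⁿ))/n)_{n≥1} converges to a limit ℓ_F(γ) ∈ [0,∞). Moreover, the resulting length-function map 𝓕(Γ) → ℝ^Γ, F ↦ ℓ_F = (γ ↦ lim_{n→∞} arcosh(F(γⁿ))/n), is continuous when 𝓕(Γ) ⊆ ℝ^Γ carries the topology of pointwise convergence and ℝ^Γ the product topology. -/

import Mathlib

/-- A kernel of hyperbolic type on a set `X`: symmetric, nonnegative, with diagonal `1`,
satisfying the hyperbolic Cauchy–Schwarz inequalities. -/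
def IsHypKernel {X : Type*} (K : X → X → ℝ) : Prop :=
  (∀ x y, K x y = K y x) ∧ (∀ x y, 0 ≤ K x y) ∧ (∀ x, K x x = 1) ∧
  ∀ (n : ℕ) (x₀ : X) (x : Fin n → X) (lam : Fin n → ℝ),
    (∑ i, ∑ j, lam i * lam j * K (x i) (x j)) ≤ (∑ k, lam k * K x₀ (x k)) ^ 2

/-- A function of hyperbolic type on a group `Γ`. -/
def IsHypType {Γ : Type*} [Group Γ] (F : Γ → ℝ) : Prop :=
  IsHypKernel (fun α β : Γ => F (α⁻¹ * β))

/-- The inverse hyperbolic cosine on `[1, ∞)`. -/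
noncomputable def arcosh (x : ℝ) : ℝ := Real.log (x + Real.sqrt (x ^ 2 - 1))

/-!
Put `d γ = arcosh (F γ)`, the displacement of the base point under `γ` in the hyperbolic space
that `F` encodes. The two-point inequality yields the triangle inequality
`d (α * β) ≤ d α + d β`, so `d (γ ^ n) / n` converges by Fekete's lemma, and `ℓ γ ≤ d γ`.
The three-point inequality yields a Ptolemy inequality which, along the orbit of `γ`, is a
convexity inequality forcing `F (γ ^ n)` to grow at least like `(F (γ ^ 2) / (4 * F γ)) ^ n`;
hence `d (γ ^ 2) ≤ d γ + ℓ γ + log 8`. Applied to `γ ^ k` and divided by `k`, the two estimates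
enclose `ℓ γ` between quantities that depend continuously on `F` and converge to `ℓ γ` as
`k → ∞`, so `ℓ γ` is both lower and upper semicontinuous in `F`.
-/

open Filter Topology

section Semicontinuity

variable {ι X α : Type*} [TopologicalSpace X] [LinearOrder α] [TopologicalSpace α]
  {p : Filter ι} [p.NeBot] {f : X → α}

theorem lowerSemicontinuous_of_tendsto_of_le [ClosedIicTopology α] {lo : ι → X → α}
    (hcont : ∀ᶠ i in p, LowerSemicontinuous (lo i)) (hle : ∀ᶠ i in p, ∀ x, lo i x ≤ f x)
    (hlim : ∀ x, Tendsto (fun i => lo i x) p (𝓝 (f x))) : LowerSemicontinuous f := by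
  intro x y hy
  obtain ⟨i, hi, hile, hiy⟩ :=
    (hcont.and (hle.and ((hlim x).eventually_const_lt hy))).exists
  exact (hi x y hiy).mono fun z hz => hz.trans_le (hile z)

theorem upperSemicontinuous_of_tendsto_of_le [ClosedIciTopology α] {hi : ι → X → α}
    (hcont : ∀ᶠ i in p, UpperSemicontinuous (hi i)) (hle : ∀ᶠ i in p, ∀ x, f x ≤ hi i x)
    (hlim : ∀ x, Tendsto (fun i => hi i x) p (𝓝 (f x))) : UpperSemicontinuous f :=
  lowerSemicontinuous_of_tendsto_of_le (α := αᵒᵈ) hcont hle hlim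

theorem continuous_of_tendsto_of_le_of_le [OrderTopology α] {lo hi : ι → X → α}
    (hlo : ∀ i, Continuous (lo i)) (hhi : ∀ i, Continuous (hi i))
    (hlo_le : ∀ᶠ i in p, ∀ x, lo i x ≤ f x) (hle_hi : ∀ᶠ i in p, ∀ x, f x ≤ hi i x)
    (hlo_lim : ∀ x, Tendsto (fun i => lo i x) p (𝓝 (f x)))
    (hhi_lim : ∀ x, Tendsto (fun i => hi i x) p (𝓝 (f x))) : Continuous f :=
  continuous_iff_lower_upperSemicontinuous.2
    ⟨lowerSemicontinuous_of_tendsto_of_le (.of_forall fun i => (hlo i).lowerSemicontinuous)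
      hlo_le hlo_lim,
    upperSemicontinuous_of_tendsto_of_le (.of_forall fun i => (hhi i).upperSemicontinuous)
      hle_hi hhi_lim⟩

end Semicontinuity

theorem geom_le_of_two_mul_le_add {u : ℕ → ℝ} {r : ℝ} (hr : 1 ≤ r) (h₀ : 0 ≤ u 0)
    (h₁ : r * u 0 ≤ u 1) (hu : ∀ n, 2 * r * u (n + 1) ≤ u n + u (n + 2)) (n : ℕ) :
    r ^ n * u 0 ≤ u n := by
  have hstep (n : ℕ) : 0 ≤ u n ∧ r * u n ≤ u (n + 1) := by
    induction n with
    | zero => exact ⟨h₀, h₁⟩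
    | succ n ih =>
      obtain ⟨hn, hrn⟩ := ih
      have hn' : 0 ≤ u (n + 1) := (mul_nonneg (by linarith) hn).trans hrn
      have hle : u n ≤ r * u (n + 1) :=
        calc u n ≤ r * u n := le_mul_of_one_le_left hn hr
          _ ≤ u (n + 1) := hrn
          _ ≤ r * u (n + 1) := le_mul_of_one_le_left hn' hr
      exact ⟨hn', by linarith [hu n]⟩
  exact geom_le (by linarith) n fun k _ => (hstep k).2

section Arcosh

variable {x : ℝ}

theorem arcosh_eq_real_arcosh : arcosh = Real.arcosh := rfl

theorem log_le_arcosh (hx : 0 < x) : Real.log x ≤ arcosh x :=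
  Real.log_le_log hx (le_add_of_nonneg_right (Real.sqrt_nonneg _))

theorem arcosh_le_log_add_log_two (hx : 0 < x) : arcosh x ≤ Real.log x + Real.log 2 := by
  have hsqrt : √(x ^ 2 - 1) ≤ x := Real.sqrt_le_iff.2 ⟨hx.le, by linarith⟩
  rw [← Real.log_mul hx.ne' two_ne_zero]
  exact Real.log_le_log (by positivity) (by linarith)

end Arcosh

namespace IsHypKernel

variable {X : Type*} {K : X → X → ℝ}

theorem symm (hK : IsHypKernel K) (x y : X) : K x y = K y x := hK.1 x y

theorem apply_self (hK : IsHypKernel K) (x : X) : K x x = 1 := hK.2.2.1 x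

theorem one_le (hK : IsHypKernel K) (x y : X) : 1 ≤ K x y := by
  have h := hK.2.2.2 1 x ![y] ![1]
  simp only [Fin.sum_univ_one, Matrix.cons_val_zero, one_mul, hK.apply_self] at h
  exact (one_le_sq_iff₀ (hK.2.1 x y)).1 h

theorem two_point (hK : IsHypKernel K) (o x y : X) (a b : ℝ) :
    a ^ 2 + b ^ 2 + 2 * a * b * K x y ≤ (a * K o x + b * K o y) ^ 2 := by
  have h := hK.2.2.2 2 o ![x, y] ![a, b]
  simp only [Fin.sum_univ_two, Matrix.cons_val_zero, Matrix.cons_val_one, hK.apply_self,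
    hK.symm y x] at h
  linarith

theorem three_point (hK : IsHypKernel K) (o x y z : X) (a b c : ℝ) :
    a ^ 2 + b ^ 2 + c ^ 2 + 2 * (a * b * K x y + a * c * K x z + b * c * K y z) ≤
      (a * K o x + b * K o y + c * K o z) ^ 2 := by
  have h := hK.2.2.2 3 o ![x, y, z] ![a, b, c]
  simp only [Fin.sum_univ_three, Matrix.cons_val_zero, Matrix.cons_val_one, Matrix.cons_val,
    hK.apply_self, hK.symm y x, hK.symm z x, hK.symm z y] at h
  linarith

theorem sq_sub_mul_le (hK : IsHypKernel K) (o x y : X) :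
    (K x y - K o x * K o y) ^ 2 ≤ (K o x ^ 2 - 1) * (K o y ^ 2 - 1) := by
  have hdiscrim := discrim_le_zero (a := K o x ^ 2 - 1) (b := 2 * (K o x * K o y - K x y))
    (c := K o y ^ 2 - 1) fun t => by linarith [hK.two_point o x y t 1]
  rw [discrim] at hdiscrim
  linarith

theorem arcosh_triangle (hK : IsHypKernel K) (x y z : X) :
    arcosh (K x z) ≤ arcosh (K x y) + arcosh (K y z) := by
  rw [hK.symm x y, arcosh_eq_real_arcosh]
  have hx := hK.one_le y x
  have hz := hK.one_le y z
  have hdist : 0 ≤ Real.arcosh (K y x) + Real.arcosh (K y z) :=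
    add_nonneg (Real.arcosh_nonneg hx) (Real.arcosh_nonneg hz)
  have hsub : K x z - K y x * K y z ≤ √(K y x ^ 2 - 1) * √(K y z ^ 2 - 1) := by
    rw [← Real.sqrt_mul (by nlinarith)]
    exact Real.le_sqrt_of_sq_le (hK.sq_sub_mul_le y x z)
  have hcosh : K x z ≤ Real.cosh (Real.arcosh (K y x) + Real.arcosh (K y z)) := by
    rw [Real.cosh_add, Real.cosh_arcosh hx, Real.cosh_arcosh hz, Real.sinh_arcosh hx,
      Real.sinh_arcosh hz]
    linarith
  rw [← Real.arcosh_cosh hdist]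
  exact (Real.arcosh_le_arcosh (zero_lt_one.trans_le (hK.one_le x z)) (Real.cosh_pos _)).2 hcosh

theorem ptolemy (hK : IsHypKernel K) (o x y z : X) :
    K x y * K o z ≤ 2 * (K x z * K o y + K y z * K o x) := by
  have hx : 0 < K o x := zero_lt_one.trans_le (hK.one_le o x)
  have hy : 0 < K o y := zero_lt_one.trans_le (hK.one_le o y)
  have hz : 0 < K o z := zero_lt_one.trans_le (hK.one_le o z)
  -- Weights `1 / K o x`, `1 / K o y`, `-2 / K o z`, cleared of denominators: the right-hand side
  -- of the three-point inequality vanishes.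
  have h := hK.three_point o x y z (K o y * K o z) (K o x * K o z) (-2 * (K o x * K o y))
  have hprod : K o x * K o y * K o z * (K x y * K o z) ≤
      K o x * K o y * K o z * (2 * (K x z * K o y + K y z * K o x)) := by
    linarith [sq_nonneg (K o y * K o z), sq_nonneg (K o x * K o z),
      sq_nonneg (-2 * (K o x * K o y))]
  exact le_of_mul_le_mul_left hprod (by positivity)

end IsHypKernel

/-- The length function `ℓ_F` of a function `F` on a group or monoid, sending `γ` to the limit of
`arcosh (F (γ ^ n)) / n`. It is a junk value where this limit does not exist; for `F` of hyperbolic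
type it always does. -/
noncomputable def lengthFunction {M : Type*} [Monoid M] (F : M → ℝ) (γ : M) : ℝ :=
  limUnder atTop fun n : ℕ => arcosh (F (γ ^ n)) / n

theorem lengthFunction_one {M : Type*} [Monoid M] (F : M → ℝ) : lengthFunction F 1 = 0 := by
  simp only [lengthFunction, one_pow]
  exact (tendsto_const_div_atTop_nhds_zero_nat (arcosh (F 1))).limUnder_eq

namespace IsHypType

variable {Γ : Type*} [Group Γ] {F : Γ → ℝ}

theorem map_one (hF : IsHypType F) : F 1 = 1 := by
  simpa using hF.apply_self 1

theorem map_inv (hF : IsHypType F) (γ : Γ) : F γ⁻¹ = F γ := by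
  simpa using hF.symm γ 1

theorem one_le (hF : IsHypType F) (γ : Γ) : 1 ≤ F γ := by
  simpa using IsHypKernel.one_le hF 1 γ

theorem pos (hF : IsHypType F) (γ : Γ) : 0 < F γ :=
  zero_lt_one.trans_le (hF.one_le γ)

theorem arcosh_nonneg (hF : IsHypType F) (γ : Γ) : 0 ≤ arcosh (F γ) :=
  Real.arcosh_nonneg (hF.one_le γ)

theorem arcosh_mul_le (hF : IsHypType F) (α β : Γ) :
    arcosh (F (α * β)) ≤ arcosh (F α) + arcosh (F β) := by
  simpa using hF.arcosh_triangle 1 α (α * β)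

theorem map_sq_mul_map_le (hF : IsHypType F) (γ δ : Γ) :
    F (γ ^ 2) * F δ ≤ 2 * F γ * (F (γ⁻¹ * δ) + F (γ * δ)) := by
  have h := hF.ptolemy 1 γ⁻¹ γ δ
  simp only [inv_inv, inv_one, one_mul, ← sq, hF.map_inv] at h
  linarith

theorem pow_sq_div_le (hF : IsHypType F) (γ : Γ) (n : ℕ) :
    (F (γ ^ 2) / (4 * F γ)) ^ n ≤ F (γ ^ n) := by
  have hγ := hF.pos γ
  set r := F (γ ^ 2) / (4 * F γ) with hr
  have hr₀ : 0 ≤ r := div_nonneg (hF.pos _).le (by positivity)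
  have hsq : F (γ ^ 2) = 2 * F γ * (2 * r) := by rw [hr]; field_simp; ring
  have hconv (δ : Γ) : 2 * r * F δ ≤ F (γ⁻¹ * δ) + F (γ * δ) := by
    have h := hF.map_sq_mul_map_le γ δ
    rw [hsq, mul_assoc] at h
    exact le_of_mul_le_mul_left h (by positivity)
  rcases le_total r 1 with hr₁ | hr₁
  · exact (pow_le_one₀ hr₀ hr₁).trans (hF.one_le _)
  have hinit : r * F 1 ≤ F γ := by
    have h := hconv 1
    simp only [mul_one, hF.map_inv] at h
    linarith
  have hstep (n : ℕ) : 2 * r * F (γ ^ (n + 1)) ≤ F (γ ^ n) + F (γ ^ (n + 2)) := by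
    simpa only [pow_succ' γ, inv_mul_cancel_left] using hconv (γ ^ (n + 1))
  simpa [hF.map_one] using geom_le_of_two_mul_le_add (u := fun n => F (γ ^ n)) hr₁
    (hF.pos _).le (by simpa using hinit) hstep n

theorem subadditive_arcosh_pow (hF : IsHypType F) (γ : Γ) :
    Subadditive fun n : ℕ => arcosh (F (γ ^ n)) := fun m n => by
  simpa only [pow_add] using hF.arcosh_mul_le (γ ^ m) (γ ^ n)

theorem arcosh_pow_div_nonneg (hF : IsHypType F) (γ : Γ) (n : ℕ) :
    0 ≤ arcosh (F (γ ^ n)) / n :=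
  div_nonneg (hF.arcosh_nonneg _) n.cast_nonneg

theorem bddBelow_range_arcosh_pow_div (hF : IsHypType F) (γ : Γ) :
    BddBelow (Set.range fun n : ℕ => arcosh (F (γ ^ n)) / n) :=
  ⟨0, Set.forall_mem_range.2 (hF.arcosh_pow_div_nonneg γ)⟩

theorem tendsto_lengthFunction (hF : IsHypType F) (γ : Γ) :
    Tendsto (fun n : ℕ => arcosh (F (γ ^ n)) / n) atTop (𝓝 (lengthFunction F γ)) :=
  tendsto_nhds_limUnder
    ⟨_, (hF.subadditive_arcosh_pow γ).tendsto_lim (hF.bddBelow_range_arcosh_pow_div γ)⟩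

theorem lengthFunction_nonneg (hF : IsHypType F) (γ : Γ) : 0 ≤ lengthFunction F γ :=
  ge_of_tendsto' (hF.tendsto_lengthFunction γ) (hF.arcosh_pow_div_nonneg γ)

theorem lengthFunction_pow (hF : IsHypType F) (γ : Γ) (k : ℕ) :
    lengthFunction F (γ ^ k) = k * lengthFunction F γ := by
  rcases eq_or_ne k 0 with rfl | hk
  · simp [lengthFunction_one]
  have hsub : Tendsto (fun n : ℕ => k * n) atTop atTop :=
    tendsto_id.const_mul_atTop' (Nat.pos_of_ne_zero hk)
  refine tendsto_nhds_unique (hF.tendsto_lengthFunction (γ ^ k))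
    ((((hF.tendsto_lengthFunction γ).comp hsub).const_mul (k : ℝ)).congr fun n => ?_)
  simp only [Function.comp_apply, pow_mul, Nat.cast_mul]
  field_simp

theorem lengthFunction_le_arcosh (hF : IsHypType F) (γ : Γ) :
    lengthFunction F γ ≤ arcosh (F γ) := by
  have hlim := (hF.subadditive_arcosh_pow γ).tendsto_lim (hF.bddBelow_range_arcosh_pow_div γ)
  rw [tendsto_nhds_unique (hF.tendsto_lengthFunction γ) hlim]
  simpa using (hF.subadditive_arcosh_pow γ).lim_le_div (hF.bddBelow_range_arcosh_pow_div γ)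
    one_ne_zero

theorem log_sq_div_le_lengthFunction (hF : IsHypType F) (γ : Γ) :
    Real.log (F (γ ^ 2) / (4 * F γ)) ≤ lengthFunction F γ := by
  have hr : 0 < F (γ ^ 2) / (4 * F γ) := div_pos (hF.pos _) (mul_pos four_pos (hF.pos γ))
  refine ge_of_tendsto (hF.tendsto_lengthFunction γ) ?_
  filter_upwards [eventually_gt_atTop 0] with n hn
  rw [le_div_iff₀' (Nat.cast_pos.2 hn), ← Real.log_pow]
  exact (Real.log_le_log (pow_pos hr n) (hF.pow_sq_div_le γ n)).trans (log_le_arcosh (hF.pos _))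

theorem arcosh_sq_le (hF : IsHypType F) (γ : Γ) :
    arcosh (F (γ ^ 2)) ≤ arcosh (F γ) + lengthFunction F γ + Real.log 8 := by
  have hγ := hF.pos γ
  have hγ₂ := hF.pos (γ ^ 2)
  have hlog : Real.log (F (γ ^ 2)) =
      Real.log (F (γ ^ 2) / (4 * F γ)) + Real.log 4 + Real.log (F γ) := by
    rw [Real.log_div hγ₂.ne' (by positivity), Real.log_mul four_ne_zero hγ.ne']
    ring
  have hlog₈ : Real.log 8 = Real.log 4 + Real.log 2 := by
    rw [← Real.log_mul four_ne_zero two_ne_zero]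
    norm_num
  linarith [arcosh_le_log_add_log_two hγ₂, log_le_arcosh hγ, hF.log_sq_div_le_lengthFunction γ]

theorem lengthFunction_le_arcosh_pow_div (hF : IsHypType F) (γ : Γ) {k : ℕ} (hk : k ≠ 0) :
    lengthFunction F γ ≤ arcosh (F (γ ^ k)) / k := by
  rw [le_div_iff₀' (Nat.cast_pos.2 (Nat.pos_of_ne_zero hk)), ← hF.lengthFunction_pow γ k]
  exact hF.lengthFunction_le_arcosh (γ ^ k)

theorem arcosh_pow_sub_div_le_lengthFunction (hF : IsHypType F) (γ : Γ) {k : ℕ} (hk : k ≠ 0) :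
    (arcosh (F ((γ ^ 2) ^ k)) - arcosh (F (γ ^ k)) - Real.log 8) / k ≤ lengthFunction F γ := by
  rw [div_le_iff₀' (Nat.cast_pos.2 (Nat.pos_of_ne_zero hk)), ← hF.lengthFunction_pow γ k,
    pow_right_comm]
  linarith [hF.arcosh_sq_le (γ ^ k)]

theorem tendsto_arcosh_pow_sub_div (hF : IsHypType F) (γ : Γ) :
    Tendsto (fun k : ℕ => (arcosh (F ((γ ^ 2) ^ k)) - arcosh (F (γ ^ k)) - Real.log 8) / k)
      atTop (𝓝 (lengthFunction F γ)) := by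
  have h := ((hF.tendsto_lengthFunction (γ ^ 2)).sub (hF.tendsto_lengthFunction γ)).sub
    (tendsto_const_div_atTop_nhds_zero_nat (Real.log 8))
  rw [hF.lengthFunction_pow γ 2] at h
  convert h using 2
  · rw [sub_div, sub_div]
  · push_cast
    ring

theorem continuous_arcosh_apply (γ : Γ) :
    Continuous fun F : {F : Γ → ℝ // IsHypType F} => arcosh (F.1 γ) :=
  Real.continuousOn_arcosh.comp_continuous
    ((continuous_apply γ).comp continuous_subtype_val) fun F => F.2.one_le γ

theorem continuous_lengthFunction_apply (γ : Γ) :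
    Continuous fun F : {F : Γ → ℝ // IsHypType F} => lengthFunction F.1 γ :=
  continuous_of_tendsto_of_le_of_le (p := atTop)
    (fun k : ℕ => (((continuous_arcosh_apply ((γ ^ 2) ^ k)).sub
      (continuous_arcosh_apply (γ ^ k))).sub continuous_const).div_const (k : ℝ))
    (fun k : ℕ => (continuous_arcosh_apply (γ ^ k)).div_const (k : ℝ))
    ((eventually_ne_atTop 0).mono fun _ hk F => F.2.arcosh_pow_sub_div_le_lengthFunction γ hk)
    ((eventually_ne_atTop 0).mono fun _ hk F => F.2.lengthFunction_le_arcosh_pow_div γ hk)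
    (fun F => F.2.tendsto_arcosh_pow_sub_div γ)
    (fun F => F.2.tendsto_lengthFunction γ)

end IsHypType

/-- For every function of hyperbolic type `F` and every `γ`, the sequence
`arcosh (F (γ^n)) / n` converges to a nonnegative limit `ℓ F γ`, and the resulting
length-function map `ℓ : 𝓕(Γ) → ℝ^Γ` is continuous (pointwise-convergence topologies). -/
theorem exists_continuous_lengthFunction {Γ : Type*} [Group Γ] :
    ∃ ℓ : {F : Γ → ℝ // IsHypType F} → Γ → ℝ,
      (∀ (F : {F : Γ → ℝ // IsHypType F}) (γ : Γ), 0 ≤ ℓ F γ ∧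
        Filter.Tendsto (fun n : ℕ => arcosh (F.1 (γ ^ n)) / n) Filter.atTop
          (nhds (ℓ F γ))) ∧
      Continuous ℓ := by
  exact ⟨fun F => lengthFunction F.1,
    fun F γ => ⟨F.2.lengthFunction_nonneg γ, F.2.tendsto_lengthFunction γ⟩,
    continuous_pi IsHypType.continuous_lengthFunction_apply⟩
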